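/- Let U be the presented group on generators ρ0, ρ1, ρ2 with relation set {ρ0^2, ρ1^2, ρ2^2, (ρ0ρ1)^6, (ρ1ρ2)^6, (ρ0ρ2)^2, (ρ2ρ1ρ0ρ1)^3}, and let N be the subgroup of U generated by the three elements x1 = ρ1(ρ0ρ2ρ1)^4ρ1, y1 = (ρ2ρ1ρ0)^4 and z1 = ρ1(ρ2ρ1ρ0)^4ρ1. Then N is a normal subgroup of U of index 192, and N is a free abelian group of rank 3, i.e. N is isomorphic to ℤ × ℤ × ℤ. -/

import Mathlib

/-!
`U` is the symmetry group of the Petrie–Coxeter polyhedron `{6,6|3}`. With `r = ρ0 ρ1`, the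
half-turns `h i = r ^ i * (ρ0 ρ2) * r ^ (-i)` generate a normal subgroup `H` whose quotient is
dihedral of order 12, and the remaining relations of `U` say that `h i` is an involution,
`h i * h (i + 2) * h (i + 4) = 1`, and six consecutive `h i` have product `1`. Hence the elements
`τ i = (h i * h (i + 1)) ^ 2` commute with each other, each of them is fixed or inverted by every
half-turn, and `τ (i + 3) = (τ i)⁻¹`. Since `x1`, `y1`, `z1` are `τ (-1)`, `τ 0`, `τ 1`, the
subgroup `N` is normal and abelian, and `H / N` is generated by four commuting involutions.

In the affine action of `U` on `R³`, the elements `x1`, `y1`, `z1` translate by `-4` along the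
coordinate axes. Over `ℤ` this makes `N` free of rank 3; over `ℤ/4` it makes `N` act trivially,
while the 16 products of the four involutions move the origin to distinct points. So `N` has index
`16 * 12`.
-/

namespace Stmt16

def r0 : FreeGroup (Fin 3) := FreeGroup.of 0
def r1 : FreeGroup (Fin 3) := FreeGroup.of 1
def r2 : FreeGroup (Fin 3) := FreeGroup.of 2

/-- The relations of the presented group `U` of Section 5. -/
def rels : Set (FreeGroup (Fin 3)) :=
  {r0 ^ 2, r1 ^ 2, r2 ^ 2, (r0 * r1) ^ 6, (r1 * r2) ^ 6, (r0 * r2) ^ 2,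
   (r2 * r1 * r0 * r1) ^ 3}

abbrev U := PresentedGroup rels

def p0 : U := PresentedGroup.of 0
def p1 : U := PresentedGroup.of 1
def p2 : U := PresentedGroup.of 2

def x1 : U := p1 * (p0 * p2 * p1) ^ 4 * p1
def y1 : U := (p2 * p1 * p0) ^ 4
def z1 : U := p1 * (p2 * p1 * p0) ^ 4 * p1

/-- The subgroup `N = ⟨x1, y1, z1⟩` of `U`. -/
def N : Subgroup U := Subgroup.closure {x1, y1, z1}

section Monoid

variable {M : Type*} [Monoid M]

/-- The homomorphism `ℤ/n → M` sending `1` to an element `g` with `g ^ n = 1`. -/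
def zmodPowHom {n : ℕ} [NeZero n] (g : M) (hg : g ^ n = 1) : Multiplicative (ZMod n) →* M where
  toFun i := g ^ i.toAdd.val
  map_one' := by simp
  map_mul' i j := by
    rw [toAdd_mul, ZMod.val_add, ← pow_eq_pow_mod _ hg, pow_add]

theorem zmodPowHom_ofAdd_one {n : ℕ} [NeZero n] (g : M) (hg : g ^ n = 1) :
    zmodPowHom g hg (.ofAdd 1) = g := by
  change g ^ (1 : ZMod n).val = g
  rw [ZMod.val_one_eq_one_mod, ← pow_eq_pow_mod _ hg, pow_one]

theorem commute_zmodPowHom {n : ℕ} [NeZero n] {g g' : M} (hg : g ^ n = 1) (hg' : g' ^ n = 1)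
    (h : Commute g g') (i j : Multiplicative (ZMod n)) :
    Commute (zmodPowHom g hg i) (zmodPowHom g' hg' j) :=
  h.pow_pow _ _

theorem commute_noncommCoprod {A B : Type*} [Monoid A] [Monoid B] {f : A →* M} {f' : B →* M}
    {g : M} (hff' : ∀ a b, Commute (f a) (f' b)) (hf : ∀ a, Commute g (f a))
    (hf' : ∀ b, Commute g (f' b)) (x : A × B) : Commute g (f.noncommCoprod f' hff' x) :=
  (hf x.1).mul_right (hf' x.2)

end Monoid

section Group

variable {G : Type*} [Group G]

theorem commute_of_mul_self_eq_one {a b : G} (ha : a * a = 1) (hb : b * b = 1)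
    (hab : a * b * (a * b) = 1) : Commute a b :=
  calc
    a * b = (a * b)⁻¹ := eq_inv_of_mul_eq_one_left hab
    _ = b * a := by
      rw [mul_inv_rev, inv_eq_of_mul_eq_one_left ha, inv_eq_of_mul_eq_one_left hb]

theorem conj_mem_of_semiconjBy {K : Subgroup G} {g a b : G}
    (h : SemiconjBy g a b) (hb : b ∈ K) : g * a * g⁻¹ ∈ K := by
  rwa [h.eq, mul_inv_cancel_right]

theorem mem_normalizer_closure_of_mul_self_eq_one {S : Set G} {g : G} (hg : g * g = 1)
    (hS : ∀ s ∈ S, g * s * g⁻¹ ∈ Subgroup.closure S) :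
    g ∈ Subgroup.normalizer (Subgroup.closure S : Set G) := by
  have hconj : ∀ n ∈ Subgroup.closure S, g * n * g⁻¹ ∈ Subgroup.closure S := by
    suffices Subgroup.closure S ≤ (Subgroup.closure S).comap (MulAut.conj g).toMonoidHom from this
    rwa [Subgroup.closure_le]
  refine Subgroup.mem_normalizer_iff.2 fun n => ⟨hconj n, fun hn => ?_⟩
  have hg' : g⁻¹ = g := inv_eq_of_mul_eq_one_left hg
  simpa [hg', mul_assoc, hg, ← mul_assoc g g] using hconj _ hn

theorem range_zmodPowHom {n : ℕ} [NeZero n] (g : G) (hg : g ^ n = 1) :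
    (zmodPowHom g hg).range = Subgroup.zpowers g := by
  refine le_antisymm ?_ ?_
  · rintro _ ⟨i, rfl⟩
    exact Subgroup.npow_mem_zpowers g _
  · exact Subgroup.zpowers_le.2 ⟨_, zmodPowHom_ofAdd_one g hg⟩

/-- The homomorphism from the dihedral group of order `2n` sending the reflection `sr 0` to `s` and
the rotation `r 1` to `t`. -/
def dihedralLift {n : ℕ} [NeZero n] {s t : G} (hs : s * s = 1) (ht : t ^ n = 1)
    (hst : SemiconjBy s t t⁻¹) : DihedralGroup n →* G where
  toFun
    | .r i => zmodPowHom t ht (.ofAdd i)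
    | .sr i => s * zmodPowHom t ht (.ofAdd i)
  map_one' := map_one (zmodPowHom t ht)
  map_mul' := by
    have hpow (i : ZMod n) :
        zmodPowHom t ht (.ofAdd i) * s = s * (zmodPowHom t ht (.ofAdd i))⁻¹ := by
      have := (hst.pow_right i.val).inv_right.eq
      rw [inv_pow, inv_inv] at this
      exact this.symm
    rintro (i | i) (j | j)
    · simp
    · simp [← mul_assoc, hpow, sub_eq_neg_add]
    · simp [mul_assoc]
    · simp [← mul_assoc, hpow, sub_eq_neg_add, mul_assoc s _ s, hs]

/-- The homomorphism `(i, j, k) ↦ x ^ i * y ^ j * z ^ k` attached to three commuting elements. -/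
def zpowTripleHom {x y z : G} (hxy : Commute x y) (hxz : Commute x z) (hyz : Commute y z) :
    Multiplicative (ℤ × ℤ × ℤ) →* G where
  toFun v := x ^ v.toAdd.1 * (y ^ v.toAdd.2.1 * z ^ v.toAdd.2.2)
  map_one' := by simp
  map_mul' v w := by
    have hx := (hxy.zpow_zpow w.toAdd.1 v.toAdd.2.1).mul_right
      (hxz.zpow_zpow w.toAdd.1 v.toAdd.2.2)
    have hy := hyz.zpow_zpow w.toAdd.2.1 v.toAdd.2.2
    simp only [toAdd_mul, Prod.fst_add, Prod.snd_add, zpow_add]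
    rw [hx.symm.mul_mul_mul_comm, hy.symm.mul_mul_mul_comm]

theorem range_zpowTripleHom {x y z : G} (hxy : Commute x y) (hxz : Commute x z)
    (hyz : Commute y z) :
    (zpowTripleHom hxy hxz hyz).range = Subgroup.closure {x, y, z} := by
  have mem {g : G} (hg : g ∈ ({x, y, z} : Set G)) (n : ℤ) : g ^ n ∈ Subgroup.closure {x, y, z} :=
    zpow_mem (Subgroup.subset_closure hg) n
  apply le_antisymm
  · rintro _ ⟨v, rfl⟩
    exact mul_mem (mem (by simp) _) (mul_mem (mem (by simp) _) (mem (by simp) _))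
  · rw [Subgroup.closure_le]
    rintro _ (rfl | rfl | rfl)
    exacts [⟨.ofAdd (1, 0, 0), by simp [zpowTripleHom]⟩,
      ⟨.ofAdd (0, 1, 0), by simp [zpowTripleHom]⟩, ⟨.ofAdd (0, 0, 1), by simp [zpowTripleHom]⟩]

end Group

/-- A sequence satisfying the relations between the half-turns `h i = r ^ i * h 0 * r ^ (-i)` that
swap the ends of the edges of a hexagonal face of the Petrie–Coxeter polyhedron `{6,6|3}`, where `r`
rotates the face by one step. -/
structure IsHalfTurnSystem {G : Type*} [Group G] (h : ℤ → G) : Prop where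
  mul_self (i : ℤ) : h i * h i = 1
  triple (i : ℤ) : h i * h (i + 2) * h (i + 4) = 1
  hexad (i : ℤ) : h i * h (i + 1) * h (i + 2) * h (i + 3) * h (i + 4) * h (i + 5) = 1

/-- The square of the product of two neighbouring half-turns, which is a translation. -/
def translation {G : Type*} [Group G] (h : ℤ → G) (i : ℤ) : G := (h i * h (i + 1)) ^ 2

namespace IsHalfTurnSystem

variable {G : Type*} [Group G] {h : ℤ → G}

theorem of_zpow_conj {r s : G} (hr : r ^ 6 = 1) (hs : s * s = 1) (htriple : (s * r ^ 2) ^ 3 = 1)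
    (hhexad : (s * r) ^ 6 = 1) : IsHalfTurnSystem fun i : ℤ => r ^ i * s * r ^ (-i) where
  mul_self i := by
    rw [show r ^ i * s * r ^ (-i) * (r ^ i * s * r ^ (-i)) = r ^ i * (s * s) * r ^ (-i) by group,
      hs, mul_one, ← zpow_add, add_neg_cancel, zpow_zero]
  triple i :=
    calc
      r ^ i * s * r ^ (-i) * (r ^ (i + 2) * s * r ^ (-(i + 2))) *
          (r ^ (i + 4) * s * r ^ (-(i + 4)))
        = r ^ i * (s * r ^ 2) ^ 3 * (r ^ 6)⁻¹ * r ^ (-i) := by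
        simp only [pow_succ (s * r ^ 2), pow_zero, one_mul]
        group
      _ = 1 := by simp [htriple, hr]
  hexad i :=
    calc
      r ^ i * s * r ^ (-i) * (r ^ (i + 1) * s * r ^ (-(i + 1))) *
          (r ^ (i + 2) * s * r ^ (-(i + 2))) * (r ^ (i + 3) * s * r ^ (-(i + 3))) *
          (r ^ (i + 4) * s * r ^ (-(i + 4))) * (r ^ (i + 5) * s * r ^ (-(i + 5)))
        = r ^ i * (s * r) ^ 6 * (r ^ 6)⁻¹ * r ^ (-i) := by
        simp only [pow_succ (s * r), pow_zero, one_mul]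
        group
      _ = 1 := by simp [hhexad, hr]

theorem map {G' : Type*} [Group G'] (H : IsHalfTurnSystem h) (f : G →* G') :
    IsHalfTurnSystem (f ∘ h) where
  mul_self i := by simpa using congrArg f (H.mul_self i)
  triple i := by simpa using congrArg f (H.triple i)
  hexad i := by simpa using congrArg f (H.hexad i)

theorem inv_eq (H : IsHalfTurnSystem h) (i : ℤ) : (h i)⁻¹ = h i :=
  inv_eq_of_mul_eq_one_left (H.mul_self i)

theorem mul_self_cancel (H : IsHalfTurnSystem h) (i : ℤ) (g : G) : h i * (h i * g) = g := by
  rw [← mul_assoc, H.mul_self, one_mul]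

theorem mul_add_two (H : IsHalfTurnSystem h) (i : ℤ) : h i * h (i + 2) = h (i + 4) := by
  rw [mul_eq_one_iff_eq_inv.1 (H.triple i), H.inv_eq]

theorem add_six (H : IsHalfTurnSystem h) (i : ℤ) : h (i + 6) = h i := by
  have hmul : h (i + 2) * h (i + 4) = h (i + 6) := by
    simpa only [add_assoc, Int.reduceAdd] using H.mul_add_two (i + 2)
  rw [← hmul, ← mul_eq_one_iff_inv_eq.1 ((mul_assoc _ _ _).symm.trans (H.triple i)), H.inv_eq]

theorem commute_add_two (H : IsHalfTurnSystem h) (i : ℤ) : Commute (h i) (h (i + 2)) :=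
  commute_of_mul_self_eq_one (H.mul_self i) (H.mul_self _) (by rw [H.mul_add_two, H.mul_self])

theorem mul_add_four (H : IsHalfTurnSystem h) (i : ℤ) : h i * h (i + 4) = h (i + 2) := by
  rw [← H.mul_add_two, H.mul_self_cancel]

theorem conj_mul_add_two (H : IsHalfTurnSystem h) (i : ℤ) :
    h (i + 1) * h i * h (i + 1) * h (i + 2) = h (i + 3) * h (i + 4) * h (i + 3) := by
  have hi : h i = h (i + 5) * h (i + 4) * h (i + 3) * h (i + 2) * h (i + 1) := by
    have hhexad := H.hexad i
    simp only [mul_assoc] at hhexad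
    rw [eq_inv_of_mul_eq_one_left hhexad]
    simp only [mul_inv_rev, H.inv_eq]
  have hmul : h (i + 1) * h (i + 5) = h (i + 3) := by
    simpa only [add_assoc, Int.reduceAdd] using H.mul_add_four (i + 1)
  calc
    h (i + 1) * h i * h (i + 1) * h (i + 2)
      = h (i + 1) * h (i + 5) * h (i + 4) * h (i + 3) *
          (h (i + 2) * (h (i + 1) * h (i + 1)) * h (i + 2)) := by rw [hi]; simp only [mul_assoc]
    _ = h (i + 3) * h (i + 4) * h (i + 3) := by
      rw [H.mul_self, mul_one, H.mul_self, mul_one, hmul]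

theorem conj_mul_self (H : IsHalfTurnSystem h) (i j : ℤ) :
    h i * h j * h i * (h i * h j * h i) = 1 := by
  simp only [mul_assoc, H.mul_self_cancel, H.mul_self]

theorem commute_conj_add_two (H : IsHalfTurnSystem h) (i : ℤ) :
    Commute (h (i + 1) * h i * h (i + 1)) (h (i + 2)) :=
  commute_of_mul_self_eq_one (H.conj_mul_self _ _) (H.mul_self _)
    (by rw [H.conj_mul_add_two, H.conj_mul_self])

theorem translation_eq (i : ℤ) :
    translation h i = h i * (h (i + 1) * h i * h (i + 1)) := by
  simp only [translation, pow_two, mul_assoc]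

theorem inv_translation (H : IsHalfTurnSystem h) (i : ℤ) :
    (translation h i)⁻¹ = (h (i + 1) * h i) ^ 2 := by
  rw [translation, ← inv_pow, mul_inv_rev, H.inv_eq, H.inv_eq]

theorem semiconjBy_translation (H : IsHalfTurnSystem h) (i : ℤ) :
    SemiconjBy (h i) (translation h i) (translation h i)⁻¹ := by
  simp only [SemiconjBy, translation, pow_two, mul_inv_rev, H.inv_eq, mul_assoc, H.mul_self,
    H.mul_self_cancel, mul_one]

theorem semiconjBy_succ_translation (H : IsHalfTurnSystem h) (i : ℤ) :
    SemiconjBy (h (i + 1)) (translation h i) (translation h i)⁻¹ := by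
  simp only [SemiconjBy, translation, pow_two, mul_inv_rev, H.inv_eq, mul_assoc]

theorem commute_add_two_translation (H : IsHalfTurnSystem h) (i : ℤ) :
    Commute (h (i + 2)) (translation h i) := by
  rw [translation_eq]
  exact (H.commute_add_two i).symm.mul_right (H.commute_conj_add_two i).symm

theorem translation_add_three (H : IsHalfTurnSystem h) (i : ℤ) :
    translation h (i + 3) = (translation h i)⁻¹ :=
  calc
    translation h (i + 3) = h (i + 3) * h (i + 4) * h (i + 3) * h (i + 4) := by
      simp only [translation, pow_two, add_assoc, Int.reduceAdd, mul_assoc]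
    _ = h (i + 1) * h i * h (i + 1) * (h (i + 2) * h (i + 4)) := by
      rw [← H.conj_mul_add_two, mul_assoc]
    _ = h (i + 1) * h i * h (i + 1) * h i := by
      rw [← H.mul_add_two, (H.commute_add_two i).eq, H.mul_self_cancel]
    _ = (translation h i)⁻¹ := by
      simp only [translation, pow_two, mul_inv_rev, H.inv_eq, mul_assoc]

theorem commute_translation_succ (H : IsHalfTurnSystem h) (i : ℤ) :
    Commute (translation h i) (translation h (i + 1)) := by
  have hinv : SemiconjBy (h (i + 1) * h (i + 2)) (translation h i) (translation h i)⁻¹ :=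
    (H.semiconjBy_succ_translation i).mul_left (H.commute_add_two_translation i)
  have hsq := hinv.inv_right.mul_left hinv
  rw [inv_inv, ← pow_two] at hsq
  simpa only [translation, add_assoc, Int.reduceAdd] using Commute.symm hsq

theorem commute_translation_add_two (H : IsHalfTurnSystem h) (i : ℤ) :
    Commute (translation h i) (translation h (i + 2)) := by
  have hcomm : Commute (translation h (i + 2)) (translation h (i + 3)) := by
    simpa only [add_assoc, Int.reduceAdd] using H.commute_translation_succ (i + 2)
  rw [H.translation_add_three] at hcomm
  exact (Commute.inv_right_iff.1 hcomm).symm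

theorem mem_of_four_mem (H : IsHalfTurnSystem h) {S : Subgroup G} {i : ℤ} (h0 : h i ∈ S)
    (h1 : h (i + 1) ∈ S) (h2 : h (i + 2) ∈ S) (h3 : h (i + 3) ∈ S) (j : ℤ) : h j ∈ S := by
  have h4 : h (i + 4) ∈ S := H.mul_add_two i ▸ mul_mem h0 h2
  have h5 : h (i + 5) ∈ S := by
    have hmul := H.mul_add_two (i + 1)
    simp only [add_assoc, Int.reduceAdd] at hmul
    exact hmul ▸ mul_mem h1 h3
  have hper : Function.Periodic h 6 := H.add_six
  obtain ⟨k, hk, hjk⟩ := hper.exists_mem_Ico (by decide) j i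
  have hcases : k = i ∨ k = i + 1 ∨ k = i + 2 ∨ k = i + 3 ∨ k = i + 4 ∨ k = i + 5 := by
    rw [Set.mem_Ico] at hk
    lia
  rw [hjk]
  obtain rfl | rfl | rfl | rfl | rfl | rfl := hcases
  exacts [h0, h1, h2, h3, h4, h5]

theorem translation_mem_of_three_mem (H : IsHalfTurnSystem h) {S : Subgroup G} {i : ℤ}
    (h0 : translation h i ∈ S) (h1 : translation h (i + 1) ∈ S) (h2 : translation h (i + 2) ∈ S)
    (j : ℤ) : translation h j ∈ S := by
  have hper : Function.Periodic (fun k => translation h k ∈ S) 3 := fun k => by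
    simp only [H.translation_add_three, inv_mem_iff]
  obtain ⟨k, hk, hjk⟩ := hper.exists_mem_Ico (by decide) j i
  have hcases : k = i ∨ k = i + 1 ∨ k = i + 2 := by
    rw [Set.mem_Ico] at hk
    lia
  rw [hjk]
  obtain rfl | rfl | rfl := hcases
  exacts [h0, h1, h2]

theorem commute_of_translation_eq_one (H : IsHalfTurnSystem h) (ht : ∀ i, translation h i = 1)
    (i j : ℤ) : Commute (h i) (h j) := by
  have hsucc (k : ℤ) : Commute (h k) (h (k + 1)) :=
    commute_of_mul_self_eq_one (H.mul_self _) (H.mul_self _) ((pow_two _).symm.trans (ht k))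
  have hpred : Commute (h i) (h (i + 5)) := by
    simpa only [add_assoc, Int.reduceAdd, H.add_six] using (hsucc (i + 5)).symm
  have hmul : h (i + 1) * h (i + 5) = h (i + 3) := by
    simpa only [add_assoc, Int.reduceAdd] using H.mul_add_four (i + 1)
  have hmem : h j ∈ Subgroup.centralizer {h i} := by
    apply H.mem_of_four_mem (i := i) <;> rw [Subgroup.mem_centralizer_singleton_iff]
    · exact (hsucc i).symm
    · exact (H.commute_add_two i).symm
    · rw [← hmul]
      exact ((hsucc i).mul_right hpred).symm
  exact (Subgroup.mem_centralizer_singleton_iff.1 hmem).symm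

theorem sq_eq_one (H : IsHalfTurnSystem h) (i : ℤ) : h i ^ 2 = 1 :=
  (pow_two _).trans (H.mul_self i)

/-- The homomorphism `(a, b, c, d) ↦ h 0 ^ a * h 1 ^ b * h 2 ^ c * h 3 ^ d` given by a commutative
system of half-turns. -/
def fourHom (H : IsHalfTurnSystem h) (hcomm : ∀ i j, Commute (h i) (h j)) :
    Multiplicative (ZMod 2) × Multiplicative (ZMod 2) × Multiplicative (ZMod 2) ×
      Multiplicative (ZMod 2) →* G :=
  have hpow (i j : ℤ) := commute_zmodPowHom (H.sq_eq_one i) (H.sq_eq_one j) (hcomm i j)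
  (zmodPowHom (h 0) (H.sq_eq_one 0)).noncommCoprod
    ((zmodPowHom (h 1) (H.sq_eq_one 1)).noncommCoprod
      ((zmodPowHom (h 2) (H.sq_eq_one 2)).noncommCoprod (zmodPowHom (h 3) (H.sq_eq_one 3))
        (hpow 2 3))
      fun a => commute_noncommCoprod _ (hpow 1 2 a) (hpow 1 3 a))
    fun a => commute_noncommCoprod _ (hpow 0 1 a)
      (commute_noncommCoprod _ (hpow 0 2 a) (hpow 0 3 a))

theorem range_fourHom (H : IsHalfTurnSystem h) (hcomm : ∀ i j, Commute (h i) (h j)) :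
    (H.fourHom hcomm).range = Subgroup.closure (Set.range h) := by
  have hfour : (H.fourHom hcomm).range = Subgroup.closure {h 0, h 1, h 2, h 3} := by
    simp only [fourHom, MonoidHom.noncommCoprod_range, range_zmodPowHom,
      Subgroup.zpowers_eq_closure, ← Subgroup.closure_union, Set.singleton_union]
  rw [hfour]
  refine le_antisymm (Subgroup.closure_mono ?_) ((Subgroup.closure_le _).2 ?_)
  · rintro _ (rfl | rfl | rfl | rfl) <;> exact Set.mem_range_self _
  · rintro _ ⟨i, rfl⟩
    apply H.mem_of_four_mem (i := 0) <;> exact Subgroup.subset_closure (by simp)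

end IsHalfTurnSystem

theorem p0_mul_self : p0 * p0 = 1 :=
  (pow_two _).symm.trans (PresentedGroup.one_of_mem (rels := rels) (x := r0 ^ 2) (by simp [rels]))

theorem p1_mul_self : p1 * p1 = 1 :=
  (pow_two _).symm.trans (PresentedGroup.one_of_mem (rels := rels) (x := r1 ^ 2) (by simp [rels]))

theorem p2_mul_self : p2 * p2 = 1 :=
  (pow_two _).symm.trans (PresentedGroup.one_of_mem (rels := rels) (x := r2 ^ 2) (by simp [rels]))

theorem p0_mul_p1_pow_six : (p0 * p1) ^ 6 = 1 :=
  PresentedGroup.one_of_mem (rels := rels) (x := (r0 * r1) ^ 6) (by simp [rels])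

theorem p1_mul_p2_pow_six : (p1 * p2) ^ 6 = 1 :=
  PresentedGroup.one_of_mem (rels := rels) (x := (r1 * r2) ^ 6) (by simp [rels])

theorem p0_mul_p2_mul_self : p0 * p2 * (p0 * p2) = 1 :=
  (pow_two _).symm.trans
    (PresentedGroup.one_of_mem (rels := rels) (x := (r0 * r2) ^ 2) (by simp [rels]))

theorem p2_mul_p1_mul_p0_mul_p1_pow_three : (p2 * p1 * p0 * p1) ^ 3 = 1 :=
  PresentedGroup.one_of_mem (rels := rels) (x := (r2 * r1 * r0 * r1) ^ 3) (by simp [rels])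

theorem p0_inv : p0⁻¹ = p0 := inv_eq_of_mul_eq_one_left p0_mul_self

theorem p1_inv : p1⁻¹ = p1 := inv_eq_of_mul_eq_one_left p1_mul_self

theorem p2_inv : p2⁻¹ = p2 := inv_eq_of_mul_eq_one_left p2_mul_self

theorem commute_p0_p2 : Commute p0 p2 :=
  commute_of_mul_self_eq_one p0_mul_self p2_mul_self p0_mul_p2_mul_self

theorem p0_mul_cancel (g : U) : p0 * (p0 * g) = g := by rw [← mul_assoc, p0_mul_self, one_mul]

theorem semiconjBy_p0_rotation : SemiconjBy p0 (p0 * p1) (p0 * p1)⁻¹ := by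
  rw [SemiconjBy, mul_inv_rev, p0_inv, p1_inv, mul_assoc, p0_mul_self, ← mul_assoc, p0_mul_self,
    one_mul, mul_one]

/-- The half-turns about the edges of the base hexagonal face, obtained from `p0 * p2` by
conjugation with the powers of the rotation `p0 * p1` of this face. -/
def halfTurn (i : ℤ) : U := (p0 * p1) ^ i * (p0 * p2) * (p0 * p1) ^ (-i)

theorem halfTurn_zero : halfTurn 0 = p0 * p2 := by simp [halfTurn]

theorem halfTurn_succ (i : ℤ) : halfTurn (i + 1) = p0 * p1 * halfTurn i * (p1 * p0) := by
  have hinv : p1 * p0 = (p0 * p1)⁻¹ := by rw [mul_inv_rev, p0_inv, p1_inv]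
  rw [hinv, halfTurn, halfTurn]
  generalize p0 * p1 = r
  group

theorem semiconjBy_p0_halfTurn (i : ℤ) : SemiconjBy p0 (halfTurn i) (halfTurn (-i)) := by
  have hpow (j : ℤ) : SemiconjBy p0 ((p0 * p1) ^ j) ((p0 * p1) ^ (-j)) := by
    simpa only [inv_zpow'] using semiconjBy_p0_rotation.zpow_right j
  have hmid : Commute p0 (p0 * p2) := (Commute.refl p0).mul_right commute_p0_p2
  exact ((hpow i).mul_right hmid).mul_right (hpow (-i))

theorem semiconjBy_p1_halfTurn (i : ℤ) : SemiconjBy p1 (halfTurn i) (halfTurn (-i - 1)) := by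
  calc
    p1 * halfTurn i = p0 * halfTurn (i + 1) * p0 * p1 := by
      rw [halfTurn_succ]
      simp only [mul_assoc, p0_mul_cancel, p1_mul_self, mul_one]
    _ = halfTurn (-i - 1) * p1 := by
      rw [(semiconjBy_p0_halfTurn _).eq, mul_assoc, mul_assoc, p0_mul_cancel, neg_add']

theorem isHalfTurnSystem_halfTurn : IsHalfTurnSystem halfTurn := by
  have htriple : p0 * p2 * (p0 * p1) ^ 2 = p2 * p1 * p0 * p1 := by
    rw [commute_p0_p2.eq, pow_two]
    simp only [mul_assoc, p0_mul_cancel]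
  have hhexad : p0 * p2 * (p0 * p1) = (p1 * p2)⁻¹ := by
    rw [commute_p0_p2.eq, mul_inv_rev, p1_inv, p2_inv]
    simp only [mul_assoc, p0_mul_cancel]
  refine .of_zpow_conj p0_mul_p1_pow_six p0_mul_p2_mul_self ?_ ?_
  · rw [htriple, p2_mul_p1_mul_p0_mul_p1_pow_three]
  · rw [hhexad, inv_pow, p1_mul_p2_pow_six, inv_one]

theorem semiconjBy_p0_translation (i : ℤ) :
    SemiconjBy p0 (translation halfTurn i) (translation halfTurn (-i - 1))⁻¹ := by
  rw [isHalfTurnSystem_halfTurn.inv_translation, sub_add_cancel, ← neg_add']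
  exact ((semiconjBy_p0_halfTurn i).mul_right (semiconjBy_p0_halfTurn (i + 1))).pow_right 2

theorem semiconjBy_p1_translation (i : ℤ) :
    SemiconjBy p1 (translation halfTurn i) (translation halfTurn (-i - 2))⁻¹ := by
  have h := ((semiconjBy_p1_halfTurn i).mul_right (semiconjBy_p1_halfTurn (i + 1))).pow_right 2
  rwa [isHalfTurnSystem_halfTurn.inv_translation, show -i - 2 + 1 = -i - 1 by ring,
    show -i - 2 = -(i + 1) - 1 by ring]

theorem x1_eq_translation : x1 = translation halfTurn (-1) := by
  have hneg : halfTurn (-1) = p1 * (p0 * p2) * p1 := by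
    rw [show (-1 : ℤ) = -0 - 1 by rfl, ← halfTurn_zero, (semiconjBy_p1_halfTurn 0).eq, mul_assoc,
      p1_mul_self, mul_one]
  have hsq : (halfTurn (-1) * halfTurn 0) ^ 2 = (p1 * (p0 * p2)) ^ 4 := by
    rw [hneg, halfTurn_zero, mul_assoc (p1 * _), ← pow_two, ← pow_mul]
  have hconj : p1 * (p0 * p2 * p1) ^ 4 * p1⁻¹ = (p1 * (p0 * p2)) ^ 4 := by
    rw [← conj_pow, ← mul_assoc p1, mul_inv_cancel_right]
  rw [x1, translation, neg_add_cancel, hsq, ← hconj, p1_inv]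

theorem y1_eq_translation : y1 = translation halfTurn 0 := by
  have hmul : halfTurn 0 * halfTurn 1 = (p2 * p1 * p0) ^ 2 := by
    have hone : halfTurn 1 = p0 * p1 * (p0 * p2) * (p1 * p0) := by
      rw [halfTurn, zpow_one, zpow_neg_one, mul_inv_rev, p0_inv, p1_inv]
    rw [hone, halfTurn_zero]
    nth_rewrite 1 [commute_p0_p2.eq]
    simp only [pow_two, mul_assoc, p0_mul_cancel]
  rw [y1, translation, zero_add, hmul, ← pow_mul]

theorem z1_eq_translation : z1 = translation halfTurn 1 := by
  have hconj : SemiconjBy p1 (translation halfTurn 0) (translation halfTurn 1) := by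
    simpa [← isHalfTurnSystem_halfTurn.translation_add_three (-2)] using semiconjBy_p1_translation 0
  rw [eq_mul_inv_of_mul_eq hconj.eq.symm, p1_inv, ← y1_eq_translation, z1, y1]

theorem N_eq_closure_translation :
    N = Subgroup.closure (translation halfTurn '' {-1, 0, 1}) := by
  rw [N, x1_eq_translation, y1_eq_translation, z1_eq_translation, Set.image_insert_eq,
    Set.image_pair]

theorem translation_mem_N : ∀ i, translation halfTurn i ∈ N := by
  rw [N_eq_closure_translation]
  apply isHalfTurnSystem_halfTurn.translation_mem_of_three_mem (i := -1) <;>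
    exact Subgroup.subset_closure (Set.mem_image_of_mem _ (by simp))

theorem normal_of_mem_normalizer {K : Subgroup U} (h0 : p0 ∈ Subgroup.normalizer (K : Set U))
    (h1 : p1 ∈ Subgroup.normalizer (K : Set U))
    (h2 : halfTurn 0 ∈ Subgroup.normalizer (K : Set U)) : K.Normal := by
  rw [← Subgroup.normalizer_eq_top_iff]
  refine Subgroup.eq_top_iff' _ |>.2 (PresentedGroup.generated_by rels _ fun i => ?_)
  have hp2 : p2 ∈ Subgroup.normalizer (K : Set U) := by
    rw [← p0_mul_cancel p2, ← halfTurn_zero]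
    exact mul_mem h0 h2
  fin_cases i
  exacts [h0, h1, hp2]

theorem mem_normalizer_N {g : U} (hg : g * g = 1)
    (hτ : ∀ i ∈ ({-1, 0, 1} : Set ℤ), g * translation halfTurn i * g⁻¹ ∈ N) :
    g ∈ Subgroup.normalizer (N : Set U) := by
  rw [N_eq_closure_translation] at hτ ⊢
  refine mem_normalizer_closure_of_mul_self_eq_one hg ?_
  rintro _ ⟨i, hi, rfl⟩
  exact hτ i hi

theorem halfTurn_zero_mem_normalizer_N : halfTurn 0 ∈ Subgroup.normalizer (N : Set U) := by
  have H := isHalfTurnSystem_halfTurn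
  refine mem_normalizer_N (H.mul_self 0) ?_
  rintro _ (rfl | rfl | rfl)
  · exact conj_mem_of_semiconjBy (H.semiconjBy_succ_translation (-1))
      (inv_mem (translation_mem_N _))
  · exact conj_mem_of_semiconjBy (H.semiconjBy_translation 0) (inv_mem (translation_mem_N _))
  · have hcomm : Commute (halfTurn 0) (translation halfTurn 1) := by
      simpa [← H.translation_add_three (-2)] using
        (H.commute_add_two_translation (-2)).inv_right
    exact conj_mem_of_semiconjBy hcomm (translation_mem_N _)

theorem normal_N : N.Normal :=
  normal_of_mem_normalizer
    (mem_normalizer_N p0_mul_self fun i _ =>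
      conj_mem_of_semiconjBy (semiconjBy_p0_translation i) (inv_mem (translation_mem_N _)))
    (mem_normalizer_N p1_mul_self fun i _ =>
      conj_mem_of_semiconjBy (semiconjBy_p1_translation i) (inv_mem (translation_mem_N _)))
    halfTurn_zero_mem_normalizer_N

/-- The subgroup generated by the half-turns about the edges of the base face; it is the kernel of
`faceHom`. -/
def halfTurnSubgroup : Subgroup U := Subgroup.closure (Set.range halfTurn)

theorem halfTurn_mem (i : ℤ) : halfTurn i ∈ halfTurnSubgroup :=
  Subgroup.subset_closure (Set.mem_range_self i)

theorem normal_halfTurnSubgroup : halfTurnSubgroup.Normal := by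
  refine normal_of_mem_normalizer ?_ ?_ (Subgroup.le_normalizer (halfTurn_mem 0))
  · refine mem_normalizer_closure_of_mul_self_eq_one p0_mul_self ?_
    rintro _ ⟨i, rfl⟩
    exact conj_mem_of_semiconjBy (semiconjBy_p0_halfTurn i) (halfTurn_mem _)
  · refine mem_normalizer_closure_of_mul_self_eq_one p1_mul_self ?_
    rintro _ ⟨i, rfl⟩
    exact conj_mem_of_semiconjBy (semiconjBy_p1_halfTurn i) (halfTurn_mem _)

/-- The homomorphism from `U` onto the dihedral group of the base face that identifies `p2` with
`p0`. -/
def faceHom : U →* DihedralGroup 6 :=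
  PresentedGroup.toGroup (f := ![.sr 0, .sr 1, .sr 0]) <| by
    simp only [rels, Set.mem_insert_iff, Set.mem_singleton_iff]
    rintro _ (rfl | rfl | rfl | rfl | rfl | rfl | rfl) <;>
      simp only [map_pow, map_mul, r0, r1, r2, FreeGroup.lift_apply_of] <;> decide

theorem faceHom_p0 : faceHom p0 = .sr 0 := PresentedGroup.toGroup.of _

theorem faceHom_p1 : faceHom p1 = .sr 1 := PresentedGroup.toGroup.of _

theorem faceHom_p2 : faceHom p2 = .sr 0 := PresentedGroup.toGroup.of _

/-- The section of `faceHom` whose image is the stabilizer of the base face. -/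
def faceSection : DihedralGroup 6 →* U :=
  dihedralLift p0_mul_self p0_mul_p1_pow_six semiconjBy_p0_rotation

theorem faceSection_sr_zero : faceSection (.sr 0) = p0 := by
  change p0 * zmodPowHom _ p0_mul_p1_pow_six 1 = p0
  rw [map_one, mul_one]

theorem faceSection_sr_one : faceSection (.sr 1) = p1 := by
  change p0 * zmodPowHom _ p0_mul_p1_pow_six (.ofAdd 1) = p1
  rw [zmodPowHom_ofAdd_one, p0_mul_cancel]

theorem faceHom_surjective : Function.Surjective faceHom := by
  have hrot (i : ZMod 6) : faceHom ((p0 * p1) ^ i.val) = .r i := by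
    simp [faceHom_p0, faceHom_p1]
  rintro (i | i)
  · exact ⟨_, hrot i⟩
  · exact ⟨p0 * (p0 * p1) ^ i.val, by rw [map_mul, hrot, faceHom_p0]; simp⟩

theorem ker_faceHom : faceHom.ker = halfTurnSubgroup := by
  have := normal_halfTurnSubgroup
  apply le_antisymm
  · have hmk : ((QuotientGroup.mk' halfTurnSubgroup).comp faceSection).comp faceHom =
        QuotientGroup.mk' halfTurnSubgroup := by
      have hp2 : (p0 : U ⧸ halfTurnSubgroup) = p2 := by
        rw [QuotientGroup.eq, p0_inv, ← halfTurn_zero]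
        exact halfTurn_mem 0
      ext i
      fin_cases i
      · exact congrArg _ ((congrArg faceSection faceHom_p0).trans faceSection_sr_zero)
      · exact congrArg _ ((congrArg faceSection faceHom_p1).trans faceSection_sr_one)
      · exact (congrArg _ ((congrArg faceSection faceHom_p2).trans faceSection_sr_zero)).trans hp2
    calc
      faceHom.ker ≤ (((QuotientGroup.mk' halfTurnSubgroup).comp faceSection).comp faceHom).ker :=
        fun g hg => by simp [MonoidHom.mem_ker.1 hg]
      _ = halfTurnSubgroup := by rw [hmk, QuotientGroup.ker_mk']
  · rw [halfTurnSubgroup, Subgroup.closure_le]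
    rintro _ ⟨i, rfl⟩
    simp [halfTurn, faceHom_p0, faceHom_p1, faceHom_p2]

theorem index_halfTurnSubgroup : halfTurnSubgroup.index = 12 := by
  rw [← ker_faceHom, Subgroup.index_ker, MonoidHom.range_eq_top.2 faceHom_surjective,
    Subgroup.card_top, DihedralGroup.nat_card]

/-- The affine maps of `R³` by which the generators act; for `R = ℝ` they are isometries realizing
`U` as the symmetry group of `{6,6|3}`. -/
def affine (R : Type*) [CommRing R] : Fin 3 → R × R × R → R × R × R :=
  ![fun v => (-v.2.1, -v.1, v.2.2), fun v => (-v.1, v.2.2, v.2.1),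
    fun v => (v.2.1 + 1, v.1 - 1, v.2.2)]

theorem affine_involutive (R : Type*) [CommRing R] (i : Fin 3) :
    Function.Involutive (affine R i) := by
  fin_cases i <;> intro v <;> simp [affine]

/-- The action of `U` on `R³` by affine maps. -/
def affineHom (R : Type*) [CommRing R] : U →* Equiv.Perm (R × R × R) :=
  PresentedGroup.toGroup (f := fun i => (affine_involutive R i).toPerm) <| by
    simp only [rels, Set.mem_insert_iff, Set.mem_singleton_iff]
    rintro _ (rfl | rfl | rfl | rfl | rfl | rfl | rfl) <;> ext v <;>
      simp [r0, r1, r2, pow_succ, affine]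

theorem affineHom_of (R : Type*) [CommRing R] (i : Fin 3) (v : R × R × R) :
    affineHom R (PresentedGroup.of i) v = affine R i v := by
  simp [affineHom]

theorem affineHom_x1 (R : Type*) [CommRing R] :
    affineHom R x1 = Equiv.addLeft ((-4, 0, 0) : R × R × R) := by
  ext v <;> simp [x1, p0, p1, p2, pow_succ, affineHom_of, affine]; ring

theorem affineHom_y1 (R : Type*) [CommRing R] :
    affineHom R y1 = Equiv.addLeft ((0, -4, 0) : R × R × R) := by
  ext v <;> simp [y1, p0, p1, p2, pow_succ, affineHom_of, affine]; ring

theorem affineHom_z1 (R : Type*) [CommRing R] :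
    affineHom R z1 = Equiv.addLeft ((0, 0, -4) : R × R × R) := by
  ext v <;> simp [z1, p0, p1, p2, pow_succ, affineHom_of, affine]; ring

theorem N_le_ker_affineHom : N ≤ (affineHom (ZMod 4)).ker := by
  rw [N, Subgroup.closure_le]
  have h4 : (4 : ZMod 4) = 0 := rfl
  rintro _ (rfl | rfl | rfl) <;>
    simp [affineHom_x1, affineHom_y1, affineHom_z1, h4, ← Prod.zero_eq_mk]

theorem eq_zero_of_affineHom_halfTurn_word (a b c d : ZMod 2)
    (h : affineHom (ZMod 4) (halfTurn 0 ^ a.val * (halfTurn 1 ^ b.val *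
      (halfTurn 2 ^ c.val * halfTurn 3 ^ d.val))) 0 = 0) : a = 0 ∧ b = 0 ∧ c = 0 ∧ d = 0 := by
  revert a b c d
  decide

theorem relIndex_N_halfTurnSubgroup : N.relIndex halfTurnSubgroup = 16 := by
  have := normal_N
  have H := isHalfTurnSystem_halfTurn.map (QuotientGroup.mk' N)
  have hcomm := H.commute_of_translation_eq_one fun i =>
    (QuotientGroup.eq_one_iff (translation halfTurn i)).2 (translation_mem_N i)
  have hinj : Function.Injective (H.fourHom hcomm) := by
    rw [injective_iff_map_eq_one]
    rintro ⟨a, b, c, d⟩ hv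
    have hmem : halfTurn 0 ^ a.toAdd.val * (halfTurn 1 ^ b.toAdd.val *
        (halfTurn 2 ^ c.toAdd.val * halfTurn 3 ^ d.toAdd.val)) ∈ N :=
      (QuotientGroup.eq_one_iff _).1 hv
    obtain ⟨rfl, rfl, rfl, rfl⟩ := eq_zero_of_affineHom_halfTurn_word _ _ _ _
      (congrArg (· 0) (N_le_ker_affineHom hmem))
    rfl
  have hmap : halfTurnSubgroup.map (QuotientGroup.mk' N) = (H.fourHom hcomm).range := by
    rw [halfTurnSubgroup, MonoidHom.map_closure, H.range_fourHom, Set.range_comp]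
  rw [← QuotientGroup.ker_mk' N, Subgroup.relIndex_ker, hmap,
    ← Nat.card_congr (MonoidHom.ofInjective hinj).toEquiv]
  simp

theorem index_N : N.index = 192 := by
  have hle : N ≤ halfTurnSubgroup := by
    rw [N_eq_closure_translation, Subgroup.closure_le]
    rintro _ ⟨i, -, rfl⟩
    exact pow_mem (mul_mem (halfTurn_mem i) (halfTurn_mem (i + 1))) 2
  rw [← Subgroup.relIndex_mul_index hle, relIndex_N_halfTurnSubgroup, index_halfTurnSubgroup]

theorem commute_x1_y1 : Commute x1 y1 := by
  rw [x1_eq_translation, y1_eq_translation]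
  exact isHalfTurnSystem_halfTurn.commute_translation_succ (-1)

theorem commute_x1_z1 : Commute x1 z1 := by
  rw [x1_eq_translation, z1_eq_translation]
  exact isHalfTurnSystem_halfTurn.commute_translation_add_two (-1)

theorem commute_y1_z1 : Commute y1 z1 := by
  rw [y1_eq_translation, z1_eq_translation]
  exact isHalfTurnSystem_halfTurn.commute_translation_succ 0

theorem zpowTripleHom_injective :
    Function.Injective (zpowTripleHom commute_x1_y1 commute_x1_z1 commute_y1_z1) := by
  rw [injective_iff_map_eq_one]
  intro v hv
  have hzero := congrArg (fun g => affineHom ℤ g 0) hv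
  have hcoord : v.toAdd.1 = 0 ∧ v.toAdd.2.1 = 0 ∧ v.toAdd.2.2 = 0 := by
    simpa [zpowTripleHom, affineHom_x1, affineHom_y1, affineHom_z1] using hzero
  exact Multiplicative.toAdd.injective (Prod.ext hcoord.1 (Prod.ext hcoord.2.1 hcoord.2.2))

/-- Intermediate claim in the proof of Theorem 5.1: `N` is normal of index 192 in `U`
and is free abelian of rank 3. -/
theorem stmt_16 :
    N.Normal ∧ N.index = 192 ∧ Nonempty (N ≃* Multiplicative (ℤ × ℤ × ℤ)) := by
  have hrange : (zpowTripleHom commute_x1_y1 commute_x1_z1 commute_y1_z1).range = N :=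
    range_zpowTripleHom _ _ _
  exact ⟨normal_N, index_N, ⟨(MulEquiv.subgroupCongr hrange).symm.trans
    (MonoidHom.ofInjective zpowTripleHom_injective).symm⟩⟩

end Stmt16
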